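/- arXiv:1310.1688 — 7 statements merged into one kernel-verified Lean document; each statement's English description precedes it below -/
import Mathlib

section
/- Let γ : ℝ × ℝ → ℝ², (s,t) ↦ γ(s,t), be a smooth map, 2π-periodic in s, such that for every t the curve s ↦ γ(s,t) is equicentroaffine, i.e. det(γ, γ_s) = 1, and let κ : ℝ × ℝ → ℝ be its equicentroaffine curvature, defined by γ_ss = -κ γ. Suppose the motion vector field has the form γ_t = -(1/2) α_s γ + α γ_s for a smooth function α : ℝ × ℝ → ℝ, 2π-periodic in s. Then the equicentroaffine curvature evolves by κ_t = (1/2) α_sss + 2 κ α_s + κ_s α. -/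
/-- Partial derivative in the first (space) variable. -/
noncomputable def pderivS {E : Type*} [NormedAddCommGroup E] [NormedSpace ℝ E]
    (f : ℝ → ℝ → E) (s t : ℝ) : E := deriv (fun u => f u t) s

/-- Partial derivative in the second (time) variable. -/
noncomputable def pderivT {E : Type*} [NormedAddCommGroup E] [NormedSpace ℝ E]
    (f : ℝ → ℝ → E) (s t : ℝ) : E := deriv (fun u => f s u) t

section PartialDerivatives

open scoped ContDiff

variable {E : Type*} [NormedAddCommGroup E] [NormedSpace ℝ E] {f : ℝ → ℝ → E}

theorem hasDerivAt_fst_of_differentiable (hf : Differentiable ℝ (fun p : ℝ × ℝ => f p.1 p.2))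
    (s t : ℝ) :
    HasDerivAt (fun u => f u t) (fderiv ℝ (fun p : ℝ × ℝ => f p.1 p.2) (s, t) (1, 0)) s :=
  HasFDerivAt.comp_hasDerivAt (l := fun p : ℝ × ℝ => f p.1 p.2) s (hf (s, t)).hasFDerivAt
    ((hasDerivAt_id s).prodMk (hasDerivAt_const s t))

theorem hasDerivAt_snd_of_differentiable (hf : Differentiable ℝ (fun p : ℝ × ℝ => f p.1 p.2))
    (s t : ℝ) :
    HasDerivAt (fun u => f s u) (fderiv ℝ (fun p : ℝ × ℝ => f p.1 p.2) (s, t) (0, 1)) t :=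
  HasFDerivAt.comp_hasDerivAt (l := fun p : ℝ × ℝ => f p.1 p.2) t (hf (s, t)).hasFDerivAt
    ((hasDerivAt_const t s).prodMk (hasDerivAt_id t))

theorem pderivS_eq_fderiv (hf : Differentiable ℝ (fun p : ℝ × ℝ => f p.1 p.2)) (s t : ℝ) :
    pderivS f s t = fderiv ℝ (fun p : ℝ × ℝ => f p.1 p.2) (s, t) (1, 0) :=
  (hasDerivAt_fst_of_differentiable hf s t).deriv

theorem pderivT_eq_fderiv (hf : Differentiable ℝ (fun p : ℝ × ℝ => f p.1 p.2)) (s t : ℝ) :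
    pderivT f s t = fderiv ℝ (fun p : ℝ × ℝ => f p.1 p.2) (s, t) (0, 1) :=
  (hasDerivAt_snd_of_differentiable hf s t).deriv

theorem hasDerivAt_pderivS (hf : ContDiff ℝ ∞ (fun p : ℝ × ℝ => f p.1 p.2)) (s t : ℝ) :
    HasDerivAt (fun u => f u t) (pderivS f s t) s :=
  (hasDerivAt_fst_of_differentiable
    (hf.differentiable (by simp)) s t).differentiableAt.hasDerivAt

theorem hasDerivAt_pderivT (hf : ContDiff ℝ ∞ (fun p : ℝ × ℝ => f p.1 p.2)) (s t : ℝ) :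
    HasDerivAt (fun u => f s u) (pderivT f s t) t :=
  (hasDerivAt_snd_of_differentiable
    (hf.differentiable (by simp)) s t).differentiableAt.hasDerivAt

theorem contDiff_pderivS (hf : ContDiff ℝ ∞ (fun p : ℝ × ℝ => f p.1 p.2)) :
    ContDiff ℝ ∞ (fun p : ℝ × ℝ => pderivS f p.1 p.2) := by
  simp only [pderivS_eq_fderiv (hf.differentiable (by simp))]
  exact (hf.fderiv_right (by simp)).clm_apply contDiff_const

/-- Partial derivatives of a smooth function commute. -/
theorem pderivT_pderivS (hf : ContDiff ℝ ∞ (fun p : ℝ × ℝ => f p.1 p.2)) (s t : ℝ) :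
    pderivT (pderivS f) s t = pderivS (pderivT f) s t := by
  have hd : Differentiable ℝ (fun p : ℝ × ℝ => f p.1 p.2) := hf.differentiable (by simp)
  have hd' : Differentiable ℝ (fderiv ℝ (fun p : ℝ × ℝ => f p.1 p.2)) :=
    (hf.fderiv_right (m := ∞) (by simp)).differentiable (by simp)
  have hS : pderivS f = fun s t => fderiv ℝ (fun p : ℝ × ℝ => f p.1 p.2) (s, t) (1, 0) := by
    funext s t
    exact pderivS_eq_fderiv hd s t
  have hT : pderivT f = fun s t => fderiv ℝ (fun p : ℝ × ℝ => f p.1 p.2) (s, t) (0, 1) := by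
    funext s t
    exact pderivT_eq_fderiv hd s t
  have hsymm : IsSymmSndFDerivAt ℝ (fun p : ℝ × ℝ => f p.1 p.2) (s, t) :=
    hf.contDiffAt.isSymmSndFDerivAt (by
      rw [minSmoothness_of_isRCLikeNormedField]
      exact WithTop.coe_le_coe.2 le_top)
  have happly (v w : ℝ × ℝ) :
      fderiv ℝ (fun p : ℝ × ℝ => fderiv ℝ (fun p : ℝ × ℝ => f p.1 p.2) p v) (s, t) w =
        fderiv ℝ (fderiv ℝ (fun p : ℝ × ℝ => f p.1 p.2)) (s, t) w v := by
    rw [fderiv_clm_apply (hd' _) (differentiableAt_const v)]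
    simp
  rw [hS, hT, pderivT_eq_fderiv (hd'.clm_apply (differentiable_const _)),
    pderivS_eq_fderiv (hd'.clm_apply (differentiable_const _))]
  exact (happly _ _).trans ((hsymm.eq _ _).trans (happly _ _).symm)

end PartialDerivatives

/-- The curvature of a smooth family of equicentroaffine curves is smooth. -/
theorem contDiff_equicentroaffine_curvature {γ : ℝ → ℝ → ℝ × ℝ} {κ : ℝ → ℝ → ℝ}
    (hγ : ContDiff ℝ (⊤ : ℕ∞) (fun p : ℝ × ℝ => γ p.1 p.2))
    (hdet : ∀ s t, (γ s t).1 * (pderivS γ s t).2 - (γ s t).2 * (pderivS γ s t).1 = 1)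
    (hκ : ∀ s t, pderivS (pderivS γ) s t = (-κ s t) • γ s t) :
    ContDiff ℝ (⊤ : ℕ∞) (fun p : ℝ × ℝ => κ p.1 p.2) := by
  have hγs := contDiff_pderivS hγ
  have hγss := contDiff_pderivS hγs
  have hκ_eq : (fun p : ℝ × ℝ => κ p.1 p.2) = fun p : ℝ × ℝ =>
      (pderivS (pderivS γ) p.1 p.2).2 * (pderivS γ p.1 p.2).1 -
        (pderivS (pderivS γ) p.1 p.2).1 * (pderivS γ p.1 p.2).2 := by
    funext p
    simp only [hκ, Prod.smul_fst, Prod.smul_snd, smul_eq_mul]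
    linear_combination -κ p.1 p.2 * hdet p.1 p.2
  rw [hκ_eq]
  fun_prop

/-- under a motion `γ_t = -(1/2) α_s γ + α γ_s` of closed equicentroaffine
plane curves, the equicentroaffine curvature evolves by
`κ_t = (1/2) α_sss + 2 κ α_s + κ_s α`. -/
theorem equicentroaffine_curvature_evolution
    (γ : ℝ → ℝ → ℝ × ℝ) (κ α : ℝ → ℝ → ℝ)
    (hγ : ContDiff ℝ (⊤ : ℕ∞) (fun p : ℝ × ℝ => γ p.1 p.2))
    (hα : ContDiff ℝ (⊤ : ℕ∞) (fun p : ℝ × ℝ => α p.1 p.2))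
    (hγper : ∀ s t, γ (s + 2 * Real.pi) t = γ s t)
    (hαper : ∀ s t, α (s + 2 * Real.pi) t = α s t)
    (hdet : ∀ s t, (γ s t).1 * (pderivS γ s t).2 - (γ s t).2 * (pderivS γ s t).1 = 1)
    (hκ : ∀ s t, pderivS (pderivS γ) s t = (-κ s t) • γ s t)
    (hmotion : ∀ s t, pderivT γ s t =
      (-(1 / 2) * pderivS α s t) • γ s t + α s t • pderivS γ s t) :
    ∀ s t, pderivT κ s t =
      (1 / 2) * pderivS (pderivS (pderivS α)) s t
        + 2 * κ s t * pderivS α s t + pderivS κ s t * α s t := by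
  intro s t
  have hκd := contDiff_equicentroaffine_curvature hγ hdet hκ
  have hγs := contDiff_pderivS hγ
  have hαs := contDiff_pderivS hα
  have hαss := contDiff_pderivS hαs
  have hmotionS (s t : ℝ) : pderivT (pderivS γ) s t =
      (-(1 / 2) * pderivS (pderivS α) s t - α s t * κ s t) • γ s t
        + ((1 / 2) * pderivS α s t) • pderivS γ s t := by
    rw [pderivT_pderivS hγ, funext₂ hmotion]
    refine (((hasDerivAt_pderivS hαs s t).const_mul (-(1 / 2))).fun_smul
      (hasDerivAt_pderivS hγ s t) |>.add
      ((hasDerivAt_pderivS hα s t).fun_smul (hasDerivAt_pderivS hγs s t))).deriv.trans ?_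
    rw [hκ]
    module
  have hcomm := pderivT_pderivS hγs s t
  have hleft : pderivT (pderivS (pderivS γ)) s t =
      (-κ s t) • pderivT γ s t + (-pderivT κ s t) • γ s t := by
    rw [funext₂ hκ]
    exact ((hasDerivAt_pderivT hκd s t).fun_neg.fun_smul (hasDerivAt_pderivT hγ s t)).deriv
  have hright : pderivS (pderivT (pderivS γ)) s t =
      (-(1 / 2) * pderivS (pderivS (pderivS α)) s t
        - (3 / 2) * κ s t * pderivS α s t - pderivS κ s t * α s t) • γ s t
        - (α s t * κ s t) • pderivS γ s t := by
    rw [funext₂ hmotionS]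
    refine ((((hasDerivAt_pderivS hαss s t).const_mul (-(1 / 2))).fun_sub
      ((hasDerivAt_pderivS hα s t).fun_mul (hasDerivAt_pderivS hκd s t))).fun_smul
      (hasDerivAt_pderivS hγ s t) |>.add
      (((hasDerivAt_pderivS hαs s t).const_mul (1 / 2)).fun_smul
        (hasDerivAt_pderivS hγs s t))).deriv.trans ?_
    rw [hκ]
    module
  rw [hleft, hright, hmotion] at hcomm
  have hfst := congrArg Prod.fst hcomm
  have hsnd := congrArg Prod.snd hcomm
  simp only [Prod.fst_add, Prod.snd_add, Prod.fst_sub, Prod.snd_sub, Prod.smul_fst,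
    Prod.smul_snd, smul_eq_mul] at hfst hsnd
  linear_combination (-(pderivS γ s t).2) * hfst + (pderivS γ s t).1 * hsnd
    + ((1 / 2) * pderivS (pderivS (pderivS α)) s t + 2 * κ s t * pderivS α s t
      + pderivS κ s t * α s t - pderivT κ s t) * hdet s t
end

section
/- Let γ : ℝ × ℝ → ℝ² be a smooth map, 2π-periodic in s, with det(γ, γ_s) = 1 for all (s,t), and let κ be defined by γ_ss = -κ γ. If γ_t = -(1/2) κ_s γ + κ γ_s, then κ satisfies the Korteweg–de Vries equation κ_t = (1/2) κ_sss + 3 κ κ_s. -/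
section PartialDerivatives

variable {E : Type*} [NormedAddCommGroup E] [NormedSpace ℝ E]

/-- Joint smoothness of a function of two real variables. -/
def JointlySmooth (f : ℝ → ℝ → E) : Prop :=
  ContDiff ℝ (⊤ : ℕ∞) (fun p : ℝ × ℝ => f p.1 p.2)

namespace JointlySmooth

variable {f g : ℝ → ℝ → E} {a : ℝ → ℝ → ℝ}

theorem hasDerivAt_fst (hf : JointlySmooth f) (s t : ℝ) :
    HasDerivAt (fun u => f u t) (fderiv ℝ (fun p : ℝ × ℝ => f p.1 p.2) (s, t) (1, 0)) s :=
  ((hf.differentiable (by simp)) (s, t)).hasFDerivAt.comp_hasDerivAt (f := fun u => (u, t)) s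
    ((hasDerivAt_id s).prodMk (hasDerivAt_const s t))

theorem hasDerivAt_snd (hf : JointlySmooth f) (s t : ℝ) :
    HasDerivAt (fun u => f s u) (fderiv ℝ (fun p : ℝ × ℝ => f p.1 p.2) (s, t) (0, 1)) t :=
  ((hf.differentiable (by simp)) (s, t)).hasFDerivAt.comp_hasDerivAt (f := fun u => (s, u)) t
    ((hasDerivAt_const t s).prodMk (hasDerivAt_id t))

theorem pderivS_eq (hf : JointlySmooth f) (s t : ℝ) :
    pderivS f s t = fderiv ℝ (fun p : ℝ × ℝ => f p.1 p.2) (s, t) (1, 0) :=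
  (hf.hasDerivAt_fst s t).deriv

theorem pderivT_eq (hf : JointlySmooth f) (s t : ℝ) :
    pderivT f s t = fderiv ℝ (fun p : ℝ × ℝ => f p.1 p.2) (s, t) (0, 1) :=
  (hf.hasDerivAt_snd s t).deriv

theorem contDiff_fderiv (hf : JointlySmooth f) :
    ContDiff ℝ (⊤ : ℕ∞) (fderiv ℝ (fun p : ℝ × ℝ => f p.1 p.2)) :=
  ContDiff.fderiv_right hf (by simp)

protected theorem pderivS (hf : JointlySmooth f) : JointlySmooth (pderivS f) := by
  simp only [JointlySmooth, hf.pderivS_eq]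
  exact hf.contDiff_fderiv.clm_apply contDiff_const

theorem smul (ha : JointlySmooth a) (hf : JointlySmooth f) :
    JointlySmooth (fun s t => a s t • f s t) :=
  ContDiff.smul ha hf

theorem const_mul (ha : JointlySmooth a) (c : ℝ) : JointlySmooth (fun s t => c * a s t) :=
  contDiff_const.mul ha

theorem pderivS_add (hf : JointlySmooth f) (hg : JointlySmooth g) (s t : ℝ) :
    pderivS (fun s t => f s t + g s t) s t =
      pderivS f s t + pderivS g s t :=
  deriv_fun_add (hf.hasDerivAt_fst s t).differentiableAt (hg.hasDerivAt_fst s t).differentiableAt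

theorem pderivS_smul (ha : JointlySmooth a) (hf : JointlySmooth f) (s t : ℝ) :
    pderivS (fun s t => a s t • f s t) s t =
      a s t • pderivS f s t + pderivS a s t • f s t :=
  deriv_fun_smul (ha.hasDerivAt_fst s t).differentiableAt (hf.hasDerivAt_fst s t).differentiableAt

theorem pderivT_smul (ha : JointlySmooth a) (hf : JointlySmooth f) (s t : ℝ) :
    pderivT (fun s t => a s t • f s t) s t =
      a s t • pderivT f s t + pderivT a s t • f s t :=
  deriv_fun_smul (ha.hasDerivAt_snd s t).differentiableAt (hf.hasDerivAt_snd s t).differentiableAt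

/-- Mixed partial derivatives of a smooth function commute. -/
theorem pderivT_pderivS (hf : JointlySmooth f) :
    pderivT (pderivS f) = pderivS (pderivT f) := by
  funext s t
  have hS : pderivS f = fun s t => fderiv ℝ (fun p : ℝ × ℝ => f p.1 p.2) (s, t) (1, 0) :=
    funext₂ hf.pderivS_eq
  have hT : pderivT f = fun s t => fderiv ℝ (fun p : ℝ × ℝ => f p.1 p.2) (s, t) (0, 1) :=
    funext₂ hf.pderivT_eq
  have hD : JointlySmooth fun s t => fderiv ℝ (fun p : ℝ × ℝ => f p.1 p.2) (s, t) :=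
    hf.contDiff_fderiv
  have hsymm : IsSymmSndFDerivAt ℝ (fun p : ℝ × ℝ => f p.1 p.2) (s, t) :=
    ContDiffAt.isSymmSndFDerivAt (ContDiff.contDiffAt hf) (by
      rw [minSmoothness_of_isRCLikeNormedField]
      exact WithTop.coe_le_coe.2 (le_top : (2 : ℕ∞) ≤ ⊤))
  have h₁ := ((hD.hasDerivAt_snd s t).clm_apply (hasDerivAt_const t ((1, 0) : ℝ × ℝ))).deriv
  have h₂ := ((hD.hasDerivAt_fst s t).clm_apply (hasDerivAt_const s ((0, 1) : ℝ × ℝ))).deriv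
  rw [hS, hT]
  simp only [map_zero, add_zero] at h₁ h₂
  exact h₁.trans ((hsymm (0, 1) (1, 0)).trans h₂.symm)

end JointlySmooth

end PartialDerivatives

/-- In a frame `u, v` of determinant one, the coefficient of `u` is determined. -/
theorem eq_of_smul_add_smul_eq {u v : ℝ × ℝ} (huv : u.1 * v.2 - u.2 * v.1 = 1)
    {a b c d : ℝ} (h : a • u + b • v = c • u + d • v) : a = c := by
  have h₁ := congrArg Prod.fst h
  have h₂ := congrArg Prod.snd h
  simp only [Prod.fst_add, Prod.snd_add, Prod.smul_fst, Prod.smul_snd, smul_eq_mul] at h₁ h₂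
  linear_combination v.2 * h₁ - v.1 * h₂ - (a - c) * huv

/-- under the motion `γ_t = -(1/2) κ_s γ + κ γ_s` of closed equicentroaffine
plane curves, the equicentroaffine curvature satisfies the KdV equation
`κ_t = (1/2) κ_sss + 3 κ κ_s`. -/
theorem equicentroaffine_KdV_flow
    (γ : ℝ → ℝ → ℝ × ℝ) (κ : ℝ → ℝ → ℝ)
    (hγ : ContDiff ℝ (⊤ : ℕ∞) (fun p : ℝ × ℝ => γ p.1 p.2))
    (hγper : ∀ s t, γ (s + 2 * Real.pi) t = γ s t)
    (hdet : ∀ s t, (γ s t).1 * (pderivS γ s t).2 - (γ s t).2 * (pderivS γ s t).1 = 1)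
    (hκ : ∀ s t, pderivS (pderivS γ) s t = (-κ s t) • γ s t)
    (hmotion : ∀ s t, pderivT γ s t =
      (-(1 / 2) * pderivS κ s t) • γ s t + κ s t • pderivS γ s t) :
    ∀ s t, pderivT κ s t =
      (1 / 2) * pderivS (pderivS (pderivS κ)) s t + 3 * κ s t * pderivS κ s t := by
  have hsγ : JointlySmooth γ := hγ
  have hγ' := hsγ.pderivS
  have hγ'' := hγ'.pderivS
  have hκ_eq : κ = fun s t => (pderivS (pderivS γ) s t).2 * (pderivS γ s t).1 -
      (pderivS (pderivS γ) s t).1 * (pderivS γ s t).2 := by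
    funext s t
    rw [hκ]
    simp only [Prod.smul_fst, Prod.smul_snd, smul_eq_mul]
    linear_combination -κ s t * hdet s t
  have hsκ : JointlySmooth κ := by
    rw [hκ_eq]
    exact ((ContDiff.snd hγ'').mul (ContDiff.fst hγ')).sub
      ((ContDiff.fst hγ'').mul (ContDiff.snd hγ'))
  have hκ' := hsκ.pderivS
  have hκ'' := hκ'.pderivS
  have hscale (c : ℝ) (a : ℝ → ℝ → ℝ) (s t : ℝ) :
      pderivS (fun s t => c * a s t) s t = c * pderivS a s t :=
    deriv_const_mul_field c
  have hγss : pderivS (pderivS γ) = fun s t => (-1 * κ s t) • γ s t := by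
    funext s t
    rw [hκ, neg_one_mul]
  -- The velocity and its first two space derivatives in the frame `γ, γ_s`.
  have hγt : pderivT γ = fun s t =>
      (-(1 / 2) * pderivS κ s t) • γ s t + κ s t • pderivS γ s t := funext₂ hmotion
  have hγts : pderivS (pderivT γ) = fun s t =>
      (-(1 / 2) * pderivS (pderivS κ) s t + -1 * (κ s t * κ s t)) • γ s t +
        ((1 / 2) * pderivS κ s t) • pderivS γ s t := by
    funext s t
    rw [hγt, JointlySmooth.pderivS_add ((hκ'.const_mul _).smul hsγ) (hsκ.smul hγ'),
      JointlySmooth.pderivS_smul (hκ'.const_mul _) hsγ, hsκ.pderivS_smul hγ',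
      hscale, hγss]
    module
  have hκκ : JointlySmooth fun s t => κ s t * κ s t := hsκ.smul hsκ
  have hγtss (s t : ℝ) : pderivS (pderivS (pderivT γ)) s t =
      (-(1 / 2) * pderivS (pderivS (pderivS κ)) s t - (5 / 2) * κ s t * pderivS κ s t) • γ s t +
        (-(κ s t * κ s t)) • pderivS γ s t := by
    have hcoef : JointlySmooth fun s t =>
        -(1 / 2) * pderivS (pderivS κ) s t + -1 * (κ s t * κ s t) :=
      ContDiff.add (hκ''.const_mul _) (hκκ.const_mul _)
    have hκκs : pderivS (fun s t => κ s t * κ s t) s t =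
        κ s t * pderivS κ s t + pderivS κ s t * κ s t := hsκ.pderivS_smul hsκ s t
    rw [hγts, JointlySmooth.pderivS_add (hcoef.smul hsγ) ((hκ'.const_mul _).smul hγ'),
      hcoef.pderivS_smul hsγ, JointlySmooth.pderivS_smul (hκ'.const_mul _) hγ',
      JointlySmooth.pderivS_add (hκ''.const_mul _) (hκκ.const_mul _),
      hscale, hscale, hscale, hκκs, hγss]
    module
  intro s t
  have hγsst : pderivT (pderivS (pderivS γ)) s t =
      (-pderivT κ s t + (1 / 2) * κ s t * pderivS κ s t) • γ s t +
        (-(κ s t * κ s t)) • pderivS γ s t := by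
    have hneg : pderivT (fun s t => -1 * κ s t) s t = -1 * pderivT κ s t :=
      deriv_const_mul_field (-1)
    rw [hγss, JointlySmooth.pderivT_smul (hsκ.const_mul _) hsγ, hneg, hmotion]
    module
  rw [hγ'.pderivT_pderivS, hsγ.pderivT_pderivS, hγtss] at hγsst
  linear_combination eq_of_smul_add_smul_eq (hdet s t) hγsst
end

section
/- Let γ : ℝ → ℝ² be a smooth 2π-periodic curve with det(γ, γ_s) = 1, and let α, β : ℝ → ℝ be smooth 2π-periodic functions. Set X = -(1/2) α_s γ + α γ_s and Y = -(1/2) β_s γ + β γ_s. Then ∫₀^{2π} det(X, Y) ds = ∫₀^{2π} α β_s ds. -/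
/-- for tangent vectors `X = -(1/2) α_s γ + α γ_s` and
`Y = -(1/2) β_s γ + β γ_s` to the space of closed equicentroaffine plane curves,
the presymplectic form satisfies `∫₀^{2π} det(X, Y) ds = ∫₀^{2π} α β_s ds`. -/
theorem omega0_formula
    (γ : ℝ → ℝ × ℝ) (α β : ℝ → ℝ) (X Y : ℝ → ℝ × ℝ)
    (hγ : ContDiff ℝ (⊤ : ℕ∞) γ)
    (hα : ContDiff ℝ (⊤ : ℕ∞) α)
    (hβ : ContDiff ℝ (⊤ : ℕ∞) β)
    (hγper : ∀ s, γ (s + 2 * Real.pi) = γ s)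
    (hαper : ∀ s, α (s + 2 * Real.pi) = α s)
    (hβper : ∀ s, β (s + 2 * Real.pi) = β s)
    (hdet : ∀ s, (γ s).1 * (deriv γ s).2 - (γ s).2 * (deriv γ s).1 = 1)
    (hX : ∀ s, X s = (-(1 / 2) * deriv α s) • γ s + α s • deriv γ s)
    (hY : ∀ s, Y s = (-(1 / 2) * deriv β s) • γ s + β s • deriv γ s) :
    ∫ s in (0 : ℝ)..(2 * Real.pi), ((X s).1 * (Y s).2 - (X s).2 * (Y s).1)
      = ∫ s in (0 : ℝ)..(2 * Real.pi), α s * deriv β s := by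
  have hα' : Continuous (deriv α) := hα.continuous_deriv (by simp)
  have hβ' : Continuous (deriv β) := hβ.continuous_deriv (by simp)
  have hdα : Differentiable ℝ α := hα.differentiable (by simp)
  have hdβ : Differentiable ℝ β := hβ.differentiable (by simp)
  have hparts := intervalIntegral.integral_mul_deriv_eq_deriv_mul
    (a := 0) (b := 2 * Real.pi)
    (fun s _ => (hdα s).hasDerivAt) (fun s _ => (hdβ s).hasDerivAt)
    (hα'.intervalIntegrable _ _) (hβ'.intervalIntegrable _ _)
  have hα0 : α (2 * Real.pi) = α 0 := by simpa using hαper 0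
  have hβ0 : β (2 * Real.pi) = β 0 := by simpa using hβper 0
  rw [hα0, hβ0] at hparts
  have hpt : ∀ s, (X s).1 * (Y s).2 - (X s).2 * (Y s).1
      = 1 / 2 * (α s * deriv β s) - 1 / 2 * (deriv α s * β s) := by
    intro s
    simp only [hX, hY, Prod.fst_add, Prod.snd_add, Prod.smul_fst, Prod.smul_snd, smul_eq_mul]
    linear_combination
      (1 / 2 * (α s * deriv β s) - 1 / 2 * (deriv α s * β s)) * hdet s
  simp only [hpt]
  have hcα : Continuous α := hdα.continuous
  have hcβ : Continuous β := hdβ.continuous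
  rw [intervalIntegral.integral_sub (Continuous.intervalIntegrable (by fun_prop) _ _)
      (Continuous.intervalIntegrable (by fun_prop) _ _),
    intervalIntegral.integral_const_mul, intervalIntegral.integral_const_mul]
  linarith
end

section
/- Let γ : ℝ → ℝ² be a smooth 2π-periodic curve with det(γ, γ_s) = 1 and equicentroaffine curvature κ defined by γ_ss = -κ γ. For smooth 2π-periodic α, β : ℝ → ℝ, set X = -(1/2) α_s γ + α γ_s and Y = -(1/2) β_s γ + β γ_s. Then ∫₀^{2π} det(X, Y_ss + κ Y) ds = ∫₀^{2π} α ((1/2) β_sss + 2 κ β_s + κ_s β) ds. -/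
/-- The equicentroaffine curvature of a smooth curve is differentiable. -/
theorem differentiable_equicentroaffine_curvature {γ : ℝ → ℝ × ℝ} {κ : ℝ → ℝ}
    (hγ : ContDiff ℝ 3 γ)
    (hdet : ∀ s, (γ s).1 * (deriv γ s).2 - (γ s).2 * (deriv γ s).1 = 1)
    (hκ : ∀ s, deriv (deriv γ) s = (-κ s) • γ s) : Differentiable ℝ κ := by
  have hγ₁ : ContDiff ℝ 2 (deriv γ) := hγ.deriv'
  have hγ₂ : ContDiff ℝ 1 (deriv (deriv γ)) := hγ₁.deriv'
  have hd₁ : Differentiable ℝ (deriv γ) := hγ₁.differentiable (by norm_num)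
  have hd₂ : Differentiable ℝ (deriv (deriv γ)) := hγ₂.differentiable (by norm_num)
  have key : κ = fun s => (deriv (deriv γ) s).2 * (deriv γ s).1
      - (deriv (deriv γ) s).1 * (deriv γ s).2 := by
    funext s
    rw [hκ s]
    simp only [Prod.smul_fst, Prod.smul_snd, smul_eq_mul]
    linear_combination (-κ s) * hdet s
  rw [key]
  fun_prop

/-- In the moving frame `(γ, γ_s)`, differentiating `a γ + b γ_s` along a curve with
`γ_ss = -κ γ`. -/
theorem deriv_smul_add_smul_deriv {E : Type*} [NormedAddCommGroup E] [NormedSpace ℝ E]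
    {γ : ℝ → E} {κ a b : ℝ → ℝ} {s : ℝ}
    (hγ : DifferentiableAt ℝ γ s) (hγ' : DifferentiableAt ℝ (deriv γ) s)
    (hκ : deriv (deriv γ) s = (-κ s) • γ s)
    (ha : DifferentiableAt ℝ a s) (hb : DifferentiableAt ℝ b s) :
    deriv (fun t => a t • γ t + b t • deriv γ t) s
      = (deriv a s - κ s * b s) • γ s + (a s + deriv b s) • deriv γ s := by
  refine ((ha.hasDerivAt.smul hγ.hasDerivAt).add
    (hb.hasDerivAt.smul hγ'.hasDerivAt)).deriv.trans ?_
  rw [hκ]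
  module

/-- The vector field `Y = -(1/2) β_s γ + β γ_s` satisfies
`Y_ss + κ Y = -((1/2) β_sss + 2 κ β_s + κ_s β) γ`. -/
theorem deriv_deriv_add_curvature_smul {E : Type*} [NormedAddCommGroup E] [NormedSpace ℝ E]
    {γ Y : ℝ → E} {κ β : ℝ → ℝ}
    (hγ : Differentiable ℝ γ) (hγ' : Differentiable ℝ (deriv γ)) (hκd : Differentiable ℝ κ)
    (hβ : ContDiff ℝ 3 β)
    (hκ : ∀ s, deriv (deriv γ) s = (-κ s) • γ s)
    (hY : ∀ s, Y s = (-(1 / 2) * deriv β s) • γ s + β s • deriv γ s) (s : ℝ) :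
    deriv (deriv Y) s + κ s • Y s
      = (-((1 / 2) * deriv (deriv (deriv β)) s + 2 * κ s * deriv β s + deriv κ s * β s)) • γ s := by
  have hβ₁ : ContDiff ℝ 2 (deriv β) := hβ.deriv'
  have hβ₂ : ContDiff ℝ 1 (deriv (deriv β)) := hβ₁.deriv'
  have d₀ : Differentiable ℝ β := hβ.differentiable (by norm_num)
  have d₁ : Differentiable ℝ (deriv β) := hβ₁.differentiable (by norm_num)
  have d₂ : Differentiable ℝ (deriv (deriv β)) := hβ₂.differentiable (by norm_num)
  have hY₁ : deriv Y = fun t => (-(1 / 2) * deriv (deriv β) t - κ t * β t) • γ t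
      + ((1 / 2) * deriv β t) • deriv γ t := by
    funext t
    rw [funext hY, deriv_smul_add_smul_deriv (hγ t) (hγ' t) (hκ t) (by fun_prop) (d₀ t),
      deriv_const_mul _ (d₁ t)]
    module
  have hcoeff : deriv (fun t => -(1 / 2) * deriv (deriv β) t - κ t * β t) s
      = -(1 / 2) * deriv (deriv (deriv β)) s - (deriv κ s * β s + κ s * deriv β s) :=
    (((d₂ s).hasDerivAt.const_mul _).sub ((hκd s).hasDerivAt.mul (d₀ s).hasDerivAt)).deriv
  rw [hY₁, deriv_smul_add_smul_deriv (hγ s) (hγ' s) (hκ s) (by fun_prop) (by fun_prop),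
    deriv_const_mul _ (d₁ s), hcoeff, hY s]
  module

/-- for tangent vectors `X = -(1/2) α_s γ + α γ_s` and
`Y = -(1/2) β_s γ + β γ_s` to the space of closed equicentroaffine plane curves,
`∫₀^{2π} det(X, Y_ss + κ Y) ds = ∫₀^{2π} α ((1/2) β_sss + 2 κ β_s + κ_s β) ds`. -/
theorem omega1_formula
    (γ : ℝ → ℝ × ℝ) (κ α β : ℝ → ℝ) (X Y : ℝ → ℝ × ℝ)
    (hγ : ContDiff ℝ (⊤ : ℕ∞) γ)
    (hα : ContDiff ℝ (⊤ : ℕ∞) α)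
    (hβ : ContDiff ℝ (⊤ : ℕ∞) β)
    (hγper : ∀ s, γ (s + 2 * Real.pi) = γ s)
    (hαper : ∀ s, α (s + 2 * Real.pi) = α s)
    (hβper : ∀ s, β (s + 2 * Real.pi) = β s)
    (hdet : ∀ s, (γ s).1 * (deriv γ s).2 - (γ s).2 * (deriv γ s).1 = 1)
    (hκ : ∀ s, deriv (deriv γ) s = (-κ s) • γ s)
    (hX : ∀ s, X s = (-(1 / 2) * deriv α s) • γ s + α s • deriv γ s)
    (hY : ∀ s, Y s = (-(1 / 2) * deriv β s) • γ s + β s • deriv γ s) :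
    ∫ s in (0 : ℝ)..(2 * Real.pi),
        ((X s).1 * (deriv (deriv Y) s + κ s • Y s).2
          - (X s).2 * (deriv (deriv Y) s + κ s • Y s).1)
      = ∫ s in (0 : ℝ)..(2 * Real.pi),
          α s * ((1 / 2) * deriv (deriv (deriv β)) s
            + 2 * κ s * deriv β s + deriv κ s * β s) := by
  have hγ₃ : ContDiff ℝ 3 γ := contDiff_infty.1 hγ 3
  have hγ₁ : ContDiff ℝ 2 (deriv γ) := hγ₃.deriv'
  have hκd := differentiable_equicentroaffine_curvature hγ₃ hdet hκ
  refine intervalIntegral.integral_congr fun s _ => ?_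
  simp only [deriv_deriv_add_curvature_smul (hγ₃.differentiable (by norm_num))
    (hγ₁.differentiable (by norm_num)) hκd (contDiff_infty.1 hβ 3) hκ hY, hX, Prod.fst_add, Prod.snd_add,
    Prod.smul_fst, Prod.smul_snd, smul_eq_mul]
  linear_combination (α s * ((1 / 2) * deriv (deriv (deriv β)) s
    + 2 * κ s * deriv β s + deriv κ s * β s)) * hdet s
end

section
/- Let α, β, κ : ℝ → ℝ be smooth 2π-periodic functions. Then ∫₀^{2π} α ((1/2) β_sss + 2 κ β_s + κ_s β) ds = - ∫₀^{2π} β ((1/2) α_sss + 2 κ α_s + κ_s α) ds. (This expresses the skew-symmetry of the presymplectic form ω₁ on the space of closed equicentroaffine curves.) -/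
/-- The derivative of a periodic function is periodic. -/
theorem Function.Periodic.deriv {f : ℝ → ℝ} {c : ℝ} (hf : Function.Periodic f c) :
    Function.Periodic (deriv f) c := fun x => by
  rw [← deriv_comp_add_const, funext hf]

/-- skew-symmetry of the form `ω₁`: for smooth 2π-periodic `α, β, κ`,
`∫₀^{2π} α Ω β_s ds = - ∫₀^{2π} β Ω α_s ds`, where
`Ω β_s = (1/2) β_sss + 2 κ β_s + κ_s β`. -/
theorem omega1_skew_symmetric
    (α β κ : ℝ → ℝ)
    (hα : ContDiff ℝ (⊤ : ℕ∞) α)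
    (hβ : ContDiff ℝ (⊤ : ℕ∞) β)
    (hκ : ContDiff ℝ (⊤ : ℕ∞) κ)
    (hαper : ∀ s, α (s + 2 * Real.pi) = α s)
    (hβper : ∀ s, β (s + 2 * Real.pi) = β s)
    (hκper : ∀ s, κ (s + 2 * Real.pi) = κ s) :
    ∫ s in (0 : ℝ)..(2 * Real.pi),
        α s * ((1 / 2) * deriv (deriv (deriv β)) s + 2 * κ s * deriv β s + deriv κ s * β s)
      = - ∫ s in (0 : ℝ)..(2 * Real.pi),
          β s * ((1 / 2) * deriv (deriv (deriv α)) s + 2 * κ s * deriv α s + deriv κ s * α s) := by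
  have smooth_deriv {f : ℝ → ℝ} (hf : ContDiff ℝ (⊤ : ℕ∞) f) :
      ContDiff ℝ (⊤ : ℕ∞) (deriv f) := (contDiff_infty_iff_deriv.1 hf).2
  have hasDeriv {f : ℝ → ℝ} (hf : ContDiff ℝ (⊤ : ℕ∞) f) (s : ℝ) :
      HasDerivAt f (deriv f s) s := (contDiff_infty_iff_deriv.1 hf).1.differentiableAt.hasDerivAt
  have hα₁ := smooth_deriv hα
  have hα₂ := smooth_deriv hα₁
  have hβ₁ := smooth_deriv hβ
  have hβ₂ := smooth_deriv hβ₁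
  have cα := hα.continuous
  have cβ := hβ.continuous
  have cκ := hκ.continuous
  have cκ₁ := (smooth_deriv hκ).continuous
  have cα₁ := hα₁.continuous
  have cβ₁ := hβ₁.continuous
  have cα₃ := (smooth_deriv hα₂).continuous
  have cβ₃ := (smooth_deriv hβ₂).continuous
  have pα₁ := Function.Periodic.deriv hαper
  have pβ₁ := Function.Periodic.deriv hβper
  rw [eq_neg_iff_add_eq_zero, ← intervalIntegral.integral_add
    (Continuous.intervalIntegrable (by fun_prop) _ _)
    (Continuous.intervalIntegrable (by fun_prop) _ _)]
  -- The sum of the two integrands is the derivative of a periodic function.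
  rw [intervalIntegral.integral_eq_sub_of_hasDerivAt
    (f := fun s => (1 / 2) * (α s * deriv (deriv β) s - deriv α s * deriv β s
      + deriv (deriv α) s * β s) + 2 * (κ s * (α s * β s)))
    (fun s _ => ?_) (Continuous.intervalIntegrable (by fun_prop) _ _)]
  · have hα₀ := Function.Periodic.eq hαper
    have hβ₀ := Function.Periodic.eq hβper
    have hκ₀ := Function.Periodic.eq hκper
    simp only [hα₀, hβ₀, hκ₀, pα₁.eq, pβ₁.eq, pα₁.deriv.eq, pβ₁.deriv.eq, sub_self]
  · convert (((((hasDeriv hα s).mul (hasDeriv hβ₂ s)).sub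
      ((hasDeriv hα₁ s).mul (hasDeriv hβ₁ s))).add
      ((hasDeriv hα₂ s).mul (hasDeriv hβ s))).const_mul (1 / 2)).add
      (((hasDeriv hκ s).mul ((hasDeriv hα s).mul (hasDeriv hβ s))).const_mul 2) using 1
    · rfl
    · simp only [Pi.mul_apply]
      ring
end

section
/- Let κ̂ : ℝ → ℝ and μ̃, P : ℝ → ℂ be smooth functions with P_s = κ̂ μ̃. Define κ = (i/2) κ̂_s + (1/4) κ̂² (the Miura transformation), W = (1/2)(μ̃_ss + κ̂² μ̃ + κ̂_s P), and f = i μ̃_s + κ̂ μ̃. Then i W_s + κ̂ W = (1/2) f_ss + 2 κ f + κ_s (i μ̃ + P). (This is the operator identity (i D_s + κ̂) Ω̂ = Ω (i D_s + κ̂) intertwining the mKdV and KdV recursion operators, written with explicit antiderivatives.) -/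
open Complex

/-- The derivative of a smooth function is smooth. -/
theorem ContDiff.deriv_of_smooth {E : Type*} [NormedAddCommGroup E] [NormedSpace ℝ E]
    {g : ℝ → E} (hg : ContDiff ℝ (⊤ : ℕ∞) g) : ContDiff ℝ (⊤ : ℕ∞) (deriv g) :=
  (contDiff_infty_iff_deriv.mp hg).2

/-- A smooth function has its `deriv` as derivative at every point. -/
theorem ContDiff.hasDerivAt_of_smooth {E : Type*} [NormedAddCommGroup E] [NormedSpace ℝ E]
    {g : ℝ → E} (hg : ContDiff ℝ (⊤ : ℕ∞) g) (s : ℝ) : HasDerivAt g (deriv g s) s :=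
  ((contDiff_infty_iff_deriv.mp hg).1 s).hasDerivAt

/-- the intertwining identity `(i D_s + κ̂) Ω̂ = Ω (i D_s + κ̂)` between the
mKdV and KdV recursion operators under the Miura transformation
`κ = (i/2) κ̂_s + (1/4) κ̂²`, written with explicit antiderivatives: with `P_s = κ̂ μ̃`,
`W = Ω̂ μ̃ = (1/2)(μ̃_ss + κ̂² μ̃ + κ̂_s P)` and `f = i μ̃_s + κ̂ μ̃`, one has
`i W_s + κ̂ W = (1/2) f_ss + 2 κ f + κ_s (i μ̃ + P)`. -/
theorem miura_intertwining
    (κh : ℝ → ℝ) (μt P κ W f : ℝ → ℂ)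
    (hκh : ContDiff ℝ (⊤ : ℕ∞) κh)
    (hμt : ContDiff ℝ (⊤ : ℕ∞) μt)
    (hP : ContDiff ℝ (⊤ : ℕ∞) P)
    (hPs : ∀ s, deriv P s = (κh s : ℂ) * μt s)
    (hκ : ∀ s, κ s = (I / 2) * Complex.ofReal (deriv κh s) + (1 / 4) * (κh s : ℂ) ^ 2)
    (hW : ∀ s, W s = (1 / 2) *
      (deriv (deriv μt) s + (κh s : ℂ) ^ 2 * μt s + Complex.ofReal (deriv κh s) * P s))
    (hf : ∀ s, f s = I * deriv μt s + (κh s : ℂ) * μt s) :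
    ∀ s, I * deriv W s + (κh s : ℂ) * W s
      = (1 / 2) * deriv (deriv f) s + 2 * κ s * f s + deriv κ s * (I * μt s + P s) := by
  have hk (s : ℝ) := (hκh.hasDerivAt_of_smooth s).ofReal_comp
  have hk' (s : ℝ) := (hκh.deriv_of_smooth.hasDerivAt_of_smooth s).ofReal_comp
  have hm := hμt.hasDerivAt_of_smooth
  have hm' := hμt.deriv_of_smooth.hasDerivAt_of_smooth
  have hm'' := hμt.deriv_of_smooth.deriv_of_smooth.hasDerivAt_of_smooth
  have hP' := hP.hasDerivAt_of_smooth
  have hf' : deriv f = fun s => I * deriv (deriv μt) s +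
      (Complex.ofReal (deriv κh s) * μt s + (κh s : ℂ) * deriv μt s) := by
    rw [funext hf]
    funext s
    exact (((hm' s).const_mul I).add ((hk s).mul (hm s))).deriv
  intro s
  have hf'' := (((hm'' s).const_mul I).add
    (((hk' s).mul (hm s)).add ((hk s).mul (hm' s)))).deriv
  have hW' := ((((hm'' s).add (((hk s).pow 2).mul (hm s))).add
    ((hk' s).mul (hP' s))).const_mul (1 / 2 : ℂ)).deriv
  have hκ' := (((hk' s).const_mul (I / 2)).add (((hk s).pow 2).const_mul (1 / 4 : ℂ))).deriv
  have eW : deriv W s = _ := (congrArg (deriv · s) (funext hW)).trans hW'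
  have eκ : deriv κ s = _ := (congrArg (deriv · s) (funext hκ)).trans hκ'
  have ef : deriv (deriv f) s = _ := (congrArg (deriv · s) hf').trans hf''
  rw [eW, eκ, ef, hW, hκ, hf, hPs]
  simp only [Pi.pow_apply]
  push_cast
  linear_combination (-Complex.ofReal (deriv κh s) * deriv μt s
    - (1 / 2) * Complex.ofReal (deriv (deriv κh) s) * μt s) * I_sq
end

section
/- Let κ̂, λ, μ, λ̃, μ̃ : ℝ → ℝ be smooth 2π-periodic functions with λ_s = κ̂ μ and λ̃_s = κ̂ μ̃. Then ∫₀^{2π} (λ + iμ)(λ̃ + iμ̃)_s ds = ∫₀^{2π} (κ̂ λ + μ_s) μ̃ ds; in particular the left-hand (a priori complex) integral is real. (This is the identity ω̂₀ = Φ*ω₀: the presymplectic form ω̂₀ on closed Euclidean plane curves is the pullback under the geometric Miura transformation of the form ω₀ on complexified closed equicentroaffine curves.) -/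
/-- the identity `ω̂₀ = Φ*ω₀`: for smooth 2π-periodic `κ̂, λ, μ, λ̃, μ̃`
with `λ_s = κ̂ μ` and `λ̃_s = κ̂ μ̃`, one has
`∫₀^{2π} (λ + iμ)(λ̃ + iμ̃)_s ds = ∫₀^{2π} (κ̂ λ + μ_s) μ̃ ds`;
in particular the left-hand (a priori complex) integral is real. -/
theorem omega0hat_is_pullback_of_omega0
    (κh lam mu lamt tmu : ℝ → ℝ)
    (hκh : ContDiff ℝ (⊤ : ℕ∞) κh)
    (hlam : ContDiff ℝ (⊤ : ℕ∞) lam)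
    (hmu : ContDiff ℝ (⊤ : ℕ∞) mu)
    (hlamt : ContDiff ℝ (⊤ : ℕ∞) lamt)
    (htmu : ContDiff ℝ (⊤ : ℕ∞) tmu)
    (hκhper : ∀ s, κh (s + 2 * Real.pi) = κh s)
    (hlamper : ∀ s, lam (s + 2 * Real.pi) = lam s)
    (hmuper : ∀ s, mu (s + 2 * Real.pi) = mu s)
    (hlamtper : ∀ s, lamt (s + 2 * Real.pi) = lamt s)
    (htmuper : ∀ s, tmu (s + 2 * Real.pi) = tmu s)
    (harclength : ∀ s, deriv lam s = κh s * mu s)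
    (harclengtht : ∀ s, deriv lamt s = κh s * tmu s) :
    ∫ s in (0 : ℝ)..(2 * Real.pi),
        (Complex.ofReal (lam s) + Complex.I * Complex.ofReal (mu s))
          * deriv (fun u => Complex.ofReal (lamt u) + Complex.I * Complex.ofReal (tmu u)) s
      = Complex.ofReal (∫ s in (0 : ℝ)..(2 * Real.pi), (κh s * lam s + deriv mu s) * tmu s) := by
  have hasDeriv {f : ℝ → ℝ} (hf : ContDiff ℝ (⊤ : ℕ∞) f) (s : ℝ) : HasDerivAt f (deriv f s) s :=
    (hf.differentiable (by simp) s).hasDerivAt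
  have hmu_deriv : Continuous (deriv mu) := hmu.continuous_deriv (by simp)
  have htmu_deriv : Continuous (deriv tmu) := htmu.continuous_deriv (by simp)
  have hκh_cont := hκh.continuous
  have hlam_cont := hlam.continuous
  have hmu_cont := hmu.continuous
  have htmu_cont := htmu.continuous
  have hbeta (s : ℝ) : deriv (fun u => Complex.ofReal (lamt u) + Complex.I * Complex.ofReal (tmu u)) s
      = Complex.ofReal (κh s * tmu s) + Complex.I * Complex.ofReal (deriv tmu s) := by
    rw [← harclengtht s]
    exact ((hasDeriv hlamt s).ofReal_comp.add
      ((hasDeriv htmu s).ofReal_comp.const_mul Complex.I)).deriv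
  simp_rw [hbeta]
  rw [← intervalIntegral.integral_ofReal, ← sub_eq_zero, ← intervalIntegral.integral_sub
    (Continuous.intervalIntegrable (by fun_prop) _ _)
    (Continuous.intervalIntegrable (by fun_prop) _ _)]
  -- The difference of the integrands is the derivative of the periodic function `i (λ + iμ) μ̃`.
  rw [intervalIntegral.integral_eq_sub_of_hasDerivAt
    (f := fun s => Complex.I * (Complex.ofReal (lam s) + Complex.I * Complex.ofReal (mu s))
      * Complex.ofReal (tmu s)) _ (Continuous.intervalIntegrable (by fun_prop) _ _)]
  · have hlam0 := hlamper 0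
    have hmu0 := hmuper 0
    have htmu0 := htmuper 0
    rw [zero_add] at hlam0 hmu0 htmu0
    simp only [hlam0, hmu0, htmu0, sub_self]
  · intro s _
    have hlam_s := hasDeriv hlam s
    rw [harclength s] at hlam_s
    refine (((hlam_s.ofReal_comp.add
      ((hasDeriv hmu s).ofReal_comp.const_mul Complex.I)).const_mul Complex.I).mul
      (hasDeriv htmu s).ofReal_comp).congr_deriv ?_
    simp only [Pi.add_apply]
    push_cast
    linear_combination (Complex.ofReal (deriv mu s) * Complex.ofReal (tmu s)) * Complex.I_sq
end
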